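/- Let H: ℝⁿ → ℝⁿ be a continuous map at bounded distance from the identity (sup‖H(x) − x‖ < ∞). Then H is surjective. -/

import Mathlib

/-!
By the Poincaré–Miranda theorem, `H - y` vanishes somewhere in a large cube as soon as each of its
coordinates is nonpositive on one of the two corresponding faces and nonnegative on the other,
which holds because `H x - x` is small compared with `x`.

Poincaré–Miranda follows by compactness from a statement on integer grids. Let `f i` be a
`0`-`1`-labelling of the grid points, equal to `0` on the lower `i`-th face and to `1` on the upper
one. Modulo `2`, the cup product `δf₁ ⌣ ⋯ ⌣ δfₙ = δ(f₁ δf₂ ⌣ ⋯ ⌣ δfₙ)` has total `1` over the grid: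
by Stokes' theorem the total is a sum over the boundary faces, of which only the upper first one
contributes, and there one is left with the total of `δf₂ ⌣ ⋯ ⌣ δfₙ`. Hence the cup product is
nonzero on some unit cube, and on that cube no `f i` is constant.
-/

open Filter Finset Asymptotics Bornology Module

section Cubical

variable {ι R : Type*} [DecidableEq ι]

lemma sum_sum_erase_eq_zero_of_symmetric [Semiring R] [CharP R 2] (T : Finset ι) (s : ι → ι → R)
    (hs : ∀ a b, s a b = s b a) : ∑ m ∈ T, ∑ k ∈ T.erase m, s m k = 0 := by
  rw [Finset.sum_sigma']
  refine Finset.sum_involution (fun p _ ↦ ⟨p.2, p.1⟩) ?_ ?_ ?_ fun _ _ ↦ rfl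
  · rintro ⟨a, b⟩ -
    rw [hs b a, CharTwo.add_self_eq_zero]
  · rintro ⟨a, b⟩ hab -
    simp only [mem_sigma, mem_erase] at hab
    grind
  · rintro ⟨a, b⟩ hab
    simp only [mem_sigma, mem_erase] at hab ⊢
    grind

/-- The coboundary of cubical cochains modulo `2`. A cochain `φ` is a family over all degrees at
once: `φ T v` is its value on the unit cube with lowest vertex `v` and edge directions `T`. No signs
occur, so this is a differential only in characteristic `2`. -/
def cubicalCoboundary [AddCommGroup R] (φ : Finset ι → (ι → ℕ) → R) (T : Finset ι) (v : ι → ℕ) :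
    R :=
  ∑ m ∈ T, (φ (T.erase m) (v + Pi.single m 1) - φ (T.erase m) v)

lemma cubicalCoboundary_cubicalCoboundary [Ring R] [CharP R 2] (φ : Finset ι → (ι → ℕ) → R)
    (T : Finset ι) (v : ι → ℕ) : cubicalCoboundary (cubicalCoboundary φ) T v = 0 := by
  simp only [cubicalCoboundary, ← Finset.sum_sub_distrib]
  refine sum_sum_erase_eq_zero_of_symmetric T _ fun a b ↦ ?_
  rw [erase_right_comm, add_right_comm]
  abel

lemma cubicalCoboundary_mul [Ring R] (f : (ι → ℕ) → R) (φ : Finset ι → (ι → ℕ) → R)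
    (T : Finset ι) (v : ι → ℕ) :
    cubicalCoboundary (fun S w ↦ f w * φ S w) T v =
      ∑ m ∈ T, (f (v + Pi.single m 1) - f v) * φ (T.erase m) (v + Pi.single m 1) +
        f v * cubicalCoboundary φ T v := by
  rw [cubicalCoboundary, cubicalCoboundary, mul_sum, ← sum_add_distrib]
  exact sum_congr rfl fun m _ ↦ by noncomm_ring

/-- The cup product `δf₁ ⌣ ⋯ ⌣ δfₖ` of the coboundaries of a list of functions on the grid, encoded
through `δf₁ ⌣ ⋯ ⌣ δfₖ = δ(f₁ δf₂ ⌣ ⋯ ⌣ δfₖ)`. -/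
def cubicalCup [Ring R] : List ((ι → ℕ) → R) → Finset ι → (ι → ℕ) → R
  | [] => fun _ _ ↦ 1
  | f :: l => cubicalCoboundary fun T v ↦ f v * cubicalCup l T v

lemma cubicalCoboundary_cubicalCup [Ring R] [CharP R 2] (l : List ((ι → ℕ) → R)) (T : Finset ι)
    (v : ι → ℕ) : cubicalCoboundary (cubicalCup l) T v = 0 := by
  cases l with
  | nil => simp [cubicalCup, cubicalCoboundary]
  | cons f l => exact cubicalCoboundary_cubicalCoboundary _ T v

lemma cubicalCup_cons [Ring R] [CharP R 2] (f : (ι → ℕ) → R) (l : List ((ι → ℕ) → R))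
    (T : Finset ι) (v : ι → ℕ) :
    cubicalCup (f :: l) T v = ∑ m ∈ T, (f (v + Pi.single m 1) - f v) *
      cubicalCup l (T.erase m) (v + Pi.single m 1) := by
  rw [cubicalCup, cubicalCoboundary_mul, cubicalCoboundary_cubicalCup, mul_zero, add_zero]

lemma cubicalCup_eq_zero_of_const_on_cube [Ring R] [CharP R 2] {f : (ι → ℕ) → R} {c : R}
    {l : List ((ι → ℕ) → R)} (hfl : f ∈ l) {T : Finset ι} {v : ι → ℕ}
    (hf : ∀ p ∈ Set.Icc v (v + ∑ m ∈ T, Pi.single m 1), f p = c) : cubicalCup l T v = 0 := by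
  induction l generalizing T v with
  | nil => simp at hfl
  | cons g l ih =>
    rw [cubicalCup_cons]
    refine sum_eq_zero fun m hm ↦ ?_
    have htop : v + Pi.single m 1 + ∑ k ∈ T.erase m, Pi.single k 1 =
        v + ∑ k ∈ T, Pi.single k 1 := by
      rw [add_assoc, add_sum_erase T (fun k ↦ (Pi.single k 1 : ι → ℕ)) hm]
    have hv : v ≤ v + Pi.single m 1 := le_self_add
    have hm_top : v + Pi.single m 1 ≤ v + ∑ k ∈ T, Pi.single k 1 := htop ▸ le_self_add
    rcases List.mem_cons.1 hfl with rfl | hfl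
    · rw [hf _ ⟨hv, hm_top⟩, hf v ⟨le_rfl, hv.trans hm_top⟩, sub_self, zero_mul]
    · rw [ih hfl fun p hp ↦ hf p ⟨hv.trans hp.1, htop ▸ hp.2⟩, mul_zero]

lemma cubicalCup_eq_zero_of_const_on_face [Ring R] [CharP R 2] {f : (ι → ℕ) → R} {c : R} {m : ι}
    {a : ℕ} (hf : ∀ p, p m = a → f p = c) {l : List ((ι → ℕ) → R)} (hfl : f ∈ l) {T : Finset ι}
    (hm : m ∉ T) {v : ι → ℕ} (hv : v m = a) : cubicalCup l T v = 0 := by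
  refine cubicalCup_eq_zero_of_const_on_cube hfl fun p hp ↦ hf p ?_
  have htop : (v + ∑ k ∈ T, Pi.single k 1 : ι → ℕ) m = a := by
    simp [hv, Finset.sum_apply, Pi.single_apply, hm]
  exact le_antisymm (htop ▸ hp.2 m) (hv ▸ hp.1 m)

variable [Fintype ι]

/-- The lowest vertices of the unit cubes with edge directions `T` that tile a face of the grid
`∏ i, {0, …, N i}`, namely the face on which the coordinates outside `T` are maximal. -/
def gridBox (N : ι → ℕ) (T : Finset ι) : Finset (ι → ℕ) :=
  Fintype.piFinset fun i ↦ if i ∈ T then range (N i) else {N i}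

lemma lt_of_mem_gridBox {N : ι → ℕ} {T : Finset ι} {v : ι → ℕ} (hv : v ∈ gridBox N T) {i : ι}
    (hi : i ∈ T) : v i < N i := by
  simpa [hi] using Fintype.mem_piFinset.1 hv i

lemma eq_of_mem_gridBox {N : ι → ℕ} {T : Finset ι} {v : ι → ℕ} (hv : v ∈ gridBox N T) {i : ι}
    (hi : i ∉ T) : v i = N i := by
  simpa [hi] using Fintype.mem_piFinset.1 hv i

lemma sum_gridBox_eq_sum_sum_update {M : Type*} [AddCommMonoid M] (N : ι → ℕ) {T : Finset ι}
    {m : ι} (hm : m ∈ T) (h : (ι → ℕ) → M) :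
    ∑ v ∈ gridBox N T, h v =
      ∑ v ∈ gridBox N (T.erase m), ∑ a ∈ range (N m), h (Function.update v m a) := by
  rw [← sum_product', eq_comm]
  refine sum_bij' (fun p _ ↦ Function.update p.1 m p.2)
    (fun v _ ↦ (Function.update v m (N m), v m)) ?_ ?_ ?_ ?_ fun _ _ ↦ rfl
  · rintro ⟨w, a⟩ hwa
    simp only [gridBox, mem_product, Fintype.mem_piFinset] at hwa ⊢
    grind
  · intro v hv
    simp only [gridBox, mem_product, Fintype.mem_piFinset] at hv ⊢
    grind
  · rintro ⟨w, a⟩ hwa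
    have hwm : w m = N m := eq_of_mem_gridBox (mem_product.1 hwa).1 (notMem_erase m T)
    simp [← hwm]
  · intro v _
    simp

lemma sum_gridBox_add_single_sub {M : Type*} [AddCommGroup M] (N : ι → ℕ) {T : Finset ι} {m : ι}
    (hm : m ∈ T) (g : (ι → ℕ) → M) :
    ∑ v ∈ gridBox N T, (g (v + Pi.single m 1) - g v) =
      ∑ v ∈ gridBox N (T.erase m), (g v - g (Function.update v m 0)) := by
  rw [sum_gridBox_eq_sum_sum_update N hm]
  refine sum_congr rfl fun v hv ↦ ?_
  have hvm : v m = N m := eq_of_mem_gridBox hv (notMem_erase m T)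
  have hstep (a : ℕ) : Function.update v m a + Pi.single m 1 = Function.update v m (a + 1) := by
    ext j
    by_cases hj : j = m
    · subst hj; simp
    · simp [hj]
  simp only [hstep]
  rw [sum_range_sub fun a ↦ g (Function.update v m a), ← hvm, Function.update_eq_self]

theorem sum_gridBox_cubicalCoboundary [AddCommGroup R] (N : ι → ℕ) (φ : Finset ι → (ι → ℕ) → R)
    (T : Finset ι) :
    ∑ v ∈ gridBox N T, cubicalCoboundary φ T v = ∑ m ∈ T, ∑ v ∈ gridBox N (T.erase m),
      (φ (T.erase m) v - φ (T.erase m) (Function.update v m 0)) := by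
  simp only [cubicalCoboundary]
  rw [sum_comm]
  exact sum_congr rfl fun m hm ↦ sum_gridBox_add_single_sub N hm _

theorem sum_gridBox_cubicalCup [Ring R] [CharP R 2] (N : ι → ℕ) (f : ι → (ι → ℕ) → R)
    (h0 : ∀ i v, v i = 0 → f i v = 0) (hN : ∀ i v, v i = N i → f i v = 1) {l : List ι}
    (hl : l.Nodup) :
    ∑ v ∈ gridBox N l.toFinset, cubicalCup (l.map f) l.toFinset v = 1 := by
  induction l with
  | nil => simp [cubicalCup, gridBox]
  | cons i l ih =>
    rw [List.nodup_cons] at hl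
    have herase : (i :: l).toFinset.erase i = l.toFinset := by
      rw [List.toFinset_cons, erase_insert (by simpa using hl.1)]
    rw [List.map_cons, cubicalCup, sum_gridBox_cubicalCoboundary,
      sum_eq_single_of_mem i (by simp), herase, ← ih hl.2]
    · refine sum_congr rfl fun v hv ↦ ?_
      have hvi : v i = N i := eq_of_mem_gridBox hv (by simpa using hl.1)
      rw [hN i v hvi, h0 i _ (Function.update_self i 0 v), one_mul, zero_mul, sub_zero]
    · intro m hm hmi
      have hml : f m ∈ l.map f := List.mem_map_of_mem (by simpa [hmi] using hm)
      refine sum_eq_zero fun v hv ↦ ?_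
      have hmT := notMem_erase m (i :: l).toFinset
      rw [cubicalCup_eq_zero_of_const_on_face (hN m) hml hmT (eq_of_mem_gridBox hv hmT),
        cubicalCup_eq_zero_of_const_on_face (h0 m) hml hmT (Function.update_self m 0 v),
        mul_zero, mul_zero, sub_self]

end Cubical

theorem exists_unit_cube_inter_nonempty_and_diff_nonempty {ι : Type*} [Finite ι] (N : ι → ℕ)
    (S : ι → Set (ι → ℕ)) (h0 : ∀ i v, v i = 0 → v ∉ S i) (hN : ∀ i v, v i = N i → v ∈ S i) :
    ∃ v : ι → ℕ, (∀ i, v i < N i) ∧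
      ∀ i, (Set.Icc v (v + 1) ∩ S i).Nonempty ∧ (Set.Icc v (v + 1) \ S i).Nonempty := by
  classical
  have := Fintype.ofFinite ι
  let f (i : ι) : (ι → ℕ) → ZMod 2 := (S i).indicator 1
  have htotal : ∑ v ∈ gridBox N univ, cubicalCup (univ.toList.map f) univ v = 1 := by
    simpa using sum_gridBox_cubicalCup N f (fun i v hv ↦ Set.indicator_of_notMem (h0 i v hv) _)
      (fun i v hv ↦ Set.indicator_of_mem (hN i v hv) _) univ.nodup_toList
  obtain ⟨v, hv, hne⟩ := exists_ne_zero_of_sum_ne_zero (htotal.trans_ne one_ne_zero)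
  have hnonconst (i : ι) (c : ZMod 2) : ¬ ∀ p ∈ Set.Icc v (v + 1), f i p = c := by
    intro hc
    have hcube : (1 : ι → ℕ) = ∑ m, Pi.single m 1 := (univ_sum_single 1).symm
    exact hne (cubicalCup_eq_zero_of_const_on_cube (List.mem_map_of_mem (mem_toList.2 (mem_univ i)))
      (hcube ▸ hc))
  refine ⟨v, fun i ↦ lt_of_mem_gridBox hv (mem_univ i), fun i ↦ ⟨?_, ?_⟩⟩
  · by_contra hempty
    exact hnonconst i 0 fun p hp ↦ Set.indicator_of_notMem (fun hpS ↦ hempty ⟨p, hp, hpS⟩) _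
  · by_contra hempty
    exact hnonconst i 1 fun p hp ↦
      Set.indicator_of_mem (not_not.1 fun hpS ↦ hempty ⟨p, hp, hpS⟩) _

section PoincareMiranda

variable {ι : Type*} {a b : ι → ℝ}

/-- The point with index `v` of the grid dividing each side of the box `Set.Icc a b` into `N` equal
parts. -/
noncomputable def gridPoint (a b : ι → ℝ) (N : ℕ) (v : ι → ℕ) : ι → ℝ :=
  fun i ↦ AffineMap.lineMap (a i) (b i) (v i / N : ℝ)

lemma gridPoint_mem_Icc (hab : a ≤ b) {N : ℕ} {v : ι → ℕ} (hv : ∀ i, v i ≤ N) :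
    gridPoint a b N v ∈ Set.Icc a b := by
  have hmem (i : ι) : gridPoint a b N v i ∈ Set.Icc (a i) (b i) := by
    have hvN : (v i / N : ℝ) ≤ 1 := div_le_one_of_le₀ (mod_cast hv i) N.cast_nonneg
    exact (convex_Icc (a i) (b i)).lineMap_mem (Set.left_mem_Icc.2 (hab i))
      (Set.right_mem_Icc.2 (hab i)) ⟨by positivity, hvN⟩
  exact ⟨fun i ↦ (hmem i).1, fun i ↦ (hmem i).2⟩

lemma dist_gridPoint_le [Fintype ι] {N : ℕ} {v p : ι → ℕ} (hp : p ∈ Set.Icc v (v + 1)) :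
    dist (gridPoint a b N p) (gridPoint a b N v) ≤ dist a b / N := by
  refine (dist_pi_le_iff (by positivity)).2 fun i ↦ ?_
  have hstep : |(p i : ℝ) - v i| ≤ 1 := by
    have hle : (v i : ℝ) ≤ p i := mod_cast hp.1 i
    have hle' : (p i : ℝ) ≤ v i + 1 := mod_cast hp.2 i
    rw [abs_le]
    constructor <;> linarith
  calc dist (gridPoint a b N p i) (gridPoint a b N v i)
      = |(p i : ℝ) - v i| / N * dist (a i) (b i) := by
        rw [gridPoint, gridPoint, dist_lineMap_lineMap, Real.dist_eq, ← sub_div, abs_div,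
          Nat.abs_cast]
    _ ≤ 1 / N * dist a b := by gcongr; exact dist_le_pi_dist a b i
    _ = dist a b / N := by ring

lemma exists_gridPoint_sign_change [Finite ι] (hab : a ≤ b) {f : (ι → ℝ) → ι → ℝ}
    (ha : ∀ i, ∀ x ∈ Set.Icc a b, x i = a i → f x i ≤ 0)
    (hb : ∀ i, ∀ x ∈ Set.Icc a b, x i = b i → 0 ≤ f x i) {N : ℕ} (hN : N ≠ 0) :
    ∃ v : ι → ℕ, (∀ i, v i < N) ∧ ∀ i,
      (∃ p ∈ Set.Icc v (v + 1), 0 ≤ f (gridPoint a b N p) i) ∧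
      ∃ q ∈ Set.Icc v (v + 1), f (gridPoint a b N q) i ≤ 0 := by
  -- The labels are forced on the faces, where the hypotheses only give weak inequalities.
  let S (i : ι) : Set (ι → ℕ) := {v | v i ≠ 0 ∧ (v i = N ∨ 0 < f (gridPoint a b N v) i)}
  obtain ⟨v, hvN, hv⟩ := exists_unit_cube_inter_nonempty_and_diff_nonempty (fun _ ↦ N) S
    (fun i v hvi hvS ↦ hvS.1 hvi) (fun i v hvi ↦ ⟨hvi ▸ hN, .inl hvi⟩)
  have hmem {p : ι → ℕ} (hp : p ∈ Set.Icc v (v + 1)) : gridPoint a b N p ∈ Set.Icc a b :=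
    gridPoint_mem_Icc hab fun i ↦ (hp.2 i).trans (hvN i)
  refine ⟨v, hvN, fun i ↦ ⟨?_, ?_⟩⟩
  · obtain ⟨p, hp, -, hpN | hpos⟩ := (hv i).1
    · exact ⟨p, hp, hb i _ (hmem hp) (by simp [gridPoint, hpN, hN])⟩
    · exact ⟨p, hp, hpos.le⟩
  · obtain ⟨q, hq, hqS⟩ := (hv i).2
    refine ⟨q, hq, ?_⟩
    by_cases hq0 : q i = 0
    · exact ha i _ (hmem hq) (by simp [gridPoint, hq0])
    · exact not_lt.1 fun hpos ↦ hqS ⟨hq0, .inr hpos⟩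

lemma exists_norm_le_of_sign_change [Fintype ι] (hab : a ≤ b) {f : (ι → ℝ) → ι → ℝ}
    (hf : ContinuousOn f (Set.Icc a b))
    (ha : ∀ i, ∀ x ∈ Set.Icc a b, x i = a i → f x i ≤ 0)
    (hb : ∀ i, ∀ x ∈ Set.Icc a b, x i = b i → 0 ≤ f x i) {ε : ℝ} (hε : 0 < ε) :
    ∃ x ∈ Set.Icc a b, ‖f x‖ ≤ ε := by
  obtain ⟨δ, hδ, hfδ⟩ := Metric.uniformContinuousOn_iff_le.1
    (isCompact_Icc.uniformContinuousOn_of_continuous hf) ε hε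
  obtain ⟨N, hN⟩ := exists_nat_gt (dist a b / δ)
  have hNpos : (0 : ℝ) < N := (by positivity : 0 ≤ dist a b / δ).trans_lt hN
  obtain ⟨v, hvN, hv⟩ := exists_gridPoint_sign_change hab ha hb (Nat.cast_pos.1 hNpos).ne'
  have hx : gridPoint a b N v ∈ Set.Icc a b := gridPoint_mem_Icc hab fun i ↦ (hvN i).le
  have hclose {p : ι → ℕ} (hp : p ∈ Set.Icc v (v + 1)) (i : ι) :
      |f (gridPoint a b N p) i - f (gridPoint a b N v) i| ≤ ε := by
    have hpx : dist (gridPoint a b N p) (gridPoint a b N v) ≤ δ :=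
      (dist_gridPoint_le hp).trans ((div_lt_comm₀ hδ hNpos).1 hN).le
    exact (dist_le_pi_dist _ _ i).trans
      (hfδ _ (gridPoint_mem_Icc hab fun i ↦ (hp.2 i).trans (hvN i)) _ hx hpx)
  refine ⟨gridPoint a b N v, hx, (pi_norm_le_iff_of_nonneg hε.le).2 fun i ↦ abs_le.2 ?_⟩
  obtain ⟨⟨p, hp, hfp⟩, q, hq, hfq⟩ := hv i
  have hp' := abs_le.1 (hclose hp i)
  have hq' := abs_le.1 (hclose hq i)
  constructor <;> linarith

theorem poincare_miranda [Finite ι] (hab : a ≤ b) {f : (ι → ℝ) → ι → ℝ}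
    (hf : ContinuousOn f (Set.Icc a b))
    (ha : ∀ i, ∀ x ∈ Set.Icc a b, x i = a i → f x i ≤ 0)
    (hb : ∀ i, ∀ x ∈ Set.Icc a b, x i = b i → 0 ≤ f x i) :
    ∃ x ∈ Set.Icc a b, f x = 0 := by
  have := Fintype.ofFinite ι
  obtain ⟨x, hx, hmin⟩ := isCompact_Icc.exists_isMinOn (Set.nonempty_Icc.2 hab) hf.norm
  refine ⟨x, hx, norm_le_zero_iff.1 (le_of_forall_pos_le_add fun ε hε ↦ ?_)⟩
  obtain ⟨z, hz, hfz⟩ := exists_norm_le_of_sign_change hab hf ha hb hε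
  simpa using (hmin hz).trans hfz

end PoincareMiranda

theorem surjective_of_sub_self_isLittleO_pi {ι : Type*} [Fintype ι] {H : (ι → ℝ) → ι → ℝ}
    (hcont : Continuous H) (hH : (fun x ↦ H x - x) =o[cobounded (ι → ℝ)] id) :
    Function.Surjective H := by
  intro y
  obtain ⟨r, -, hr⟩ := hasBasis_cobounded_norm.eventually_iff.1 (hH.bound one_half_pos)
  set s : ℝ := max r (2 * ‖y‖)
  have hs : 0 ≤ s := le_max_of_le_right (by positivity)
  have hys : 2 * ‖y‖ ≤ s := le_max_right _ _
  have hclose {x : ι → ℝ} (hx : x ∈ Set.Icc (fun _ ↦ -s) fun _ ↦ s) {i : ι} (hi : |x i| = s) :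
      |H x i - x i| ≤ s / 2 := by
    have hnorm : ‖x‖ = s := le_antisymm
      ((pi_norm_le_iff_of_nonneg hs).2 fun j ↦ abs_le.2 ⟨hx.1 j, hx.2 j⟩)
      (hi ▸ norm_le_pi_norm x i)
    have hsmall := hr (show r ≤ ‖x‖ from hnorm ▸ le_max_left _ _)
    rw [id, hnorm] at hsmall
    calc |H x i - x i| ≤ ‖H x - x‖ := norm_le_pi_norm (H x - x) i
      _ ≤ s / 2 := by linarith
  have hy (i : ι) : |y i| ≤ s / 2 := by linarith [norm_le_pi_norm y i, Real.norm_eq_abs (y i)]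
  obtain ⟨x, -, hx⟩ := poincare_miranda (a := fun _ ↦ -s) (b := fun _ ↦ s) (f := fun x ↦ H x - y)
    (fun _ ↦ neg_le_self hs) (by fun_prop)
    (fun i x hx hi ↦ by
      have hxi := abs_le.1 (hclose hx (by rw [hi, abs_neg, abs_of_nonneg hs]))
      change H x i - y i ≤ 0
      linarith [abs_le.1 (hy i)])
    (fun i x hx hi ↦ by
      have hxi := abs_le.1 (hclose hx (by rw [hi, abs_of_nonneg hs]))
      change 0 ≤ H x i - y i
      linarith [abs_le.1 (hy i)])
  exact ⟨x, sub_eq_zero.1 hx⟩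

theorem stmt11_general {E : Type*} [NormedAddCommGroup E] [NormedSpace ℝ E] [FiniteDimensional ℝ E]
    {H : E → E} (hcont : Continuous H) (hH : (fun x ↦ H x - x) =o[cobounded E] id) :
    Function.Surjective H := by
  let e : E ≃L[ℝ] (Fin (finrank ℝ E) → ℝ) := (finBasis ℝ E).equivFunL
  have hconj : (fun x ↦ e (H (e.symm x)) - x) =o[cobounded _] id := by
    have hsymm : (fun x ↦ H (e.symm x) - e.symm x) =o[cobounded _] e.symm :=
      hH.comp_tendsto e.symm.antilipschitz.tendsto_cobounded
    have hsymm_id : e.symm =O[cobounded _] id := e.symm.isBigO_comp id _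
    simpa using (e.isBigO_comp _ _).trans_isLittleO (hsymm.trans_isBigO hsymm_id)
  have hsurj : Function.Surjective (e ∘ H ∘ e.symm) :=
    surjective_of_sub_self_isLittleO_pi (by fun_prop) hconj
  simpa using hsurj

/-- A continuous map `H : ℝⁿ → ℝⁿ` at bounded distance from the identity is
surjective. -/
theorem stmt11 (n : ℕ) (H : (Fin n → ℝ) → (Fin n → ℝ)) (hcont : Continuous H)
    (K : ℝ) (hK : ∀ x, ‖H x - x‖ ≤ K) :
    Function.Surjective H :=
  stmt11_general hcont <|
    (isBigO_of_le' (g := fun _ ↦ (1 : ℝ)) _ fun x ↦ by simpa using hK x).trans_isLittleO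
      (isLittleO_const_id_cobounded 1)
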